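/- (Entropy statistic theorem) For any continuous linear functional μ on B(X, 𝔄) and any ε > 0, there exist a neighborhood O(μ) of μ in the weak-* topology on the dual of B(X, 𝔄) and a constant C(ε, μ) > 0 such that for all natural numbers n and all f ∈ L¹(X, m): ∫_{Xₙ(O(μ))} |f ∘ αⁿ| dm ≤ C(ε, μ)·e^{n(τ(μ)+ε)}·∫_X |f| dm, where Xₙ(O(μ)) = { x ∈ X : δ_{x,n} ∈ O(μ) }; if τ(μ) = −∞, the same conclusion holds with the exponent n(τ(μ)+ε) replaced by n·(−1/ε). -/

import Mathlib

open MeasureTheory Filter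
open scoped ENNReal NNReal

noncomputable section

def birkhoff {X : Type*} (α : X → X) (φ : X → ℝ) (n : ℕ) (x : X) : ℝ :=
  ∑ i ∈ Finset.range n, φ (α^[i] x)

def ShiftBounded {X : Type*} [MeasurableSpace X] (m : Measure X) (α : X → X) : Prop :=
  ∃ C : ℝ≥0, 0 < C ∧ ∀ G : Set X, MeasurableSet G → m (α ⁻¹' G) ≤ (C : ℝ≥0∞) * m G

def weightedOpNorm {X : Type*} [MeasurableSpace X] (m : Measure X) (α : X → X) (s : ℕ)
    (ψ : X → ℝ) (k : ℕ) : ℝ :=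
  sSup {r : ℝ | ∃ f : X → ℝ, Integrable f m ∧ (∫ x, |f x| ∂m) = 1 ∧
    r = ∫ x, Real.exp (∑ j ∈ Finset.range k, ψ (α^[s * j] x)) * |f (α^[s * k] x)| ∂m}

def spectralPotentialBase {X : Type*} [MeasurableSpace X] (m : Measure X) (α : X → X)
    (s : ℕ) (ψ : X → ℝ) : ℝ :=
  limUnder atTop fun k : ℕ => Real.log (weightedOpNorm m α s ψ k) / (k : ℝ)

def spectralPotential {X : Type*} [MeasurableSpace X] (m : Measure X) (α : X → X)
    (φ : X → ℝ) : ℝ :=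
  spectralPotentialBase m α 1 φ

/-- `f` belongs to `B(X, 𝔄)`: it is measurable and bounded. -/
def IsBddMeas {X : Type*} [MeasurableSpace X] (f : X → ℝ) : Prop :=
  Measurable f ∧ ∃ C : ℝ, ∀ x, |f x| ≤ C

/-- `μ` represents a continuous linear functional on the Banach space `B(X, 𝔄)` of bounded
measurable functions with the supremum norm: it is additive, homogeneous, and bounded with
respect to the supremum norm on `B(X, 𝔄)`. -/
def IsBFunctional {X : Type*} [MeasurableSpace X] (μ : (X → ℝ) → ℝ) : Prop :=
  (∀ f g : X → ℝ, IsBddMeas f → IsBddMeas g → μ (f + g) = μ f + μ g) ∧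
  (∀ (c : ℝ) (f : X → ℝ), IsBddMeas f → μ (c • f) = c * μ f) ∧
  ∃ K : ℝ, ∀ f : X → ℝ, IsBddMeas f → |μ f| ≤ K * (⨆ x, |f x|)

/-- A measurable partition of unity on `X` made of nonnegative functions in `B(X, 𝔄)`
summing to `1`. -/
structure BPartUnity (X : Type*) [MeasurableSpace X] where
  k : ℕ
  g : Fin k → X → ℝ
  meas : ∀ i, Measurable (g i)
  nonneg : ∀ i x, 0 ≤ g i x
  sum_one : ∀ x, ∑ i, g i x = 1

/-- `μ ∈ M_α(X, 𝔄)`: a positive normalized `α`-invariant continuous linear functional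
on `B(X, 𝔄)`. -/
def MemMalphaB {X : Type*} [MeasurableSpace X] (α : X → X) (μ : (X → ℝ) → ℝ) : Prop :=
  IsBFunctional μ ∧ (∀ f : X → ℝ, IsBddMeas f → (∀ x, 0 ≤ f x) → 0 ≤ μ f) ∧
  μ (fun _ => 1) = 1 ∧ ∀ f : X → ℝ, IsBddMeas f → μ (f ∘ α) = μ f

def entTerm (a r : ℝ) : EReal :=
  if a = 0 then 0 else if r = 0 then ⊥ else ((a * Real.log (r / a) : ℝ) : EReal)

def tauNB {X : Type*} [MeasurableSpace X] (m : Measure X) (α : X → X)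
    (μ : (X → ℝ) → ℝ) (n : ℕ) (D : BPartUnity X) : EReal :=
  sSup {r : EReal | ∃ f : X → ℝ, Integrable f m ∧ (∫ x, |f x| ∂m) = 1 ∧
    r = ∑ i, entTerm (μ (D.g i)) (∫ x, D.g i x * |f (α^[n] x)| ∂m)}

def tEntropyB {X : Type*} [MeasurableSpace X] (m : Measure X) (α : X → X)
    (μ : (X → ℝ) → ℝ) : EReal :=
  ⨅ (n : ℕ) (_ : 0 < n) (D : BPartUnity X), (((n : ℝ)⁻¹ : ℝ) : EReal) * tauNB m α μ n D

/-- The t-entropy on the dual of `B(X, 𝔄)`, extended by `-∞` outside `M_α(X, 𝔄)`. -/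
def tEntropyBExt {X : Type*} [MeasurableSpace X] (m : Measure X) (α : X → X)
    (μ : (X → ℝ) → ℝ) : EReal :=
  @ite _ (MemMalphaB α μ) (Classical.dec _) (tEntropyB m α μ) ⊥

/-!
If `τ(μ) < t` and `μ ∈ M_α`, pick `N` and a partition of unity `D` with `τ_N(μ, D) < N t`. The mass
vectors `(∫ gᵢ |f ∘ α^N| dm)ᵢ` of unit `f` form a bounded convex set; at a maximiser of
`∑ μ[gᵢ] ln (rᵢ + δ)` over its closure, with `δ > 0` small, the first-order condition yields weights
`cᵢ > 0` for which `ψ = ∑ (ln cᵢ) gᵢ` satisfies `‖(A^N)_ψ‖ ≤ 1` and `μ[ψ] > -N t`. Iterating this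
contraction and averaging over the residues modulo `N` bounds `∫ exp(n δ_{x,n}[ψ] / N) |f ∘ αⁿ| dm`
by a multiple of `‖f‖` uniformly in `n`. Where `δ_{x,n}[ψ]` is close to `μ[ψ]` the weight exceeds
`exp(-n t)`, and Chebyshev's inequality concludes. Weak-* limits of empirical measures are positive,
normalized and invariant, so for `μ ∉ M_α` some neighbourhood has `Xₙ(O(μ)) = ∅` for all large `n`.
-/

section FiniteDimensional

variable {ι : Type*} [Fintype ι] {a r : ι → ℝ}

/-- The weighted geometric mean of the ratios `r i / a i` with weights `a i`. It is the exponential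
of the sum of the `entTerm`s and, unlike that sum, it is real-valued and continuous up to the
boundary of the orthant; a factor with `a i = 0` is `1`. -/
def relGeomMean (a r : ι → ℝ) : ℝ :=
  ∏ i, (r i / a i) ^ a i

theorem relGeomMean_eq_exp (h : ∀ i, a i ≠ 0 → 0 < r i / a i) :
    relGeomMean a r = Real.exp (∑ i, a i * Real.log (r i / a i)) := by
  rw [Real.exp_sum]
  refine Finset.prod_congr rfl fun i _ => ?_
  by_cases hi : a i = 0
  · simp [hi]
  · rw [Real.rpow_def_of_pos (h i hi), mul_comm]

theorem continuous_relGeomMean (ha : ∀ i, 0 ≤ a i) : Continuous (relGeomMean a) :=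
  continuous_finsetProd _ fun i _ =>
    (Real.continuous_rpow_const (ha i)).comp ((continuous_apply i).div_const _)

theorem sum_entTerm_eq_coe (h : ∀ i, a i ≠ 0 → r i ≠ 0) :
    ∑ i, entTerm (a i) (r i) = ((∑ i, a i * Real.log (r i / a i) : ℝ) : EReal) := by
  have hterm : ∀ i, entTerm (a i) (r i) = ((a i * Real.log (r i / a i) : ℝ) : EReal) := by
    intro i
    by_cases hi : a i = 0
    · simp [entTerm, hi]
    · simp [entTerm, hi, h i hi]
  have hcoe := map_sum (⟨⟨Real.toEReal, EReal.coe_zero⟩, EReal.coe_add⟩ : ℝ →+ EReal)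
    (fun i => a i * Real.log (r i / a i)) Finset.univ
  exact (Finset.sum_congr rfl fun i _ => hterm i).trans hcoe.symm

theorem relGeomMean_le_exp_of_sum_entTerm_le (ha : ∀ i, 0 ≤ a i) (hr : ∀ i, 0 ≤ r i) {t : ℝ}
    (h : ∑ i, entTerm (a i) (r i) ≤ t) : relGeomMean a r ≤ Real.exp t := by
  by_cases hzero : ∃ i, a i ≠ 0 ∧ r i = 0
  · obtain ⟨i, hai, hri⟩ := hzero
    have hfactor : (r i / a i) ^ a i = 0 := by rw [hri, zero_div, Real.zero_rpow hai]
    rw [relGeomMean, Finset.prod_eq_zero (Finset.mem_univ i) hfactor]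
    exact (Real.exp_pos t).le
  · push Not at hzero
    rw [sum_entTerm_eq_coe hzero, EReal.coe_le_coe_iff] at h
    rw [relGeomMean_eq_exp fun i hi =>
      div_pos ((hr i).lt_of_ne' (hzero i hi)) ((ha i).lt_of_ne' hi)]
    exact Real.exp_le_exp.2 h

theorem exists_forall_relGeomMean_add_const_lt (ha : ∀ i, 0 ≤ a i) {K : Set (ι → ℝ)}
    (hK : IsCompact K) {s : ℝ} (h : ∀ r ∈ K, relGeomMean a r < s) :
    ∃ δ > 0, ∀ r ∈ K, relGeomMean a (fun i => r i + δ) < s := by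
  obtain ⟨δ, hδ, hsub⟩ := hK.exists_cthickening_subset_open
    (isOpen_lt (continuous_relGeomMean ha) continuous_const) h
  refine ⟨δ, hδ, fun r hr => hsub (Metric.mem_cthickening_of_dist_le _ r δ K hr ?_)⟩
  rw [dist_pi_le_iff hδ.le]
  intro i
  simp [abs_of_pos hδ]

/-- The witness `q` maximises `∑ i, a i * log (r i)`; the bound is its first-order condition. -/
theorem exists_forall_sum_mul_div_le (a : ι → ℝ) {K : Set (ι → ℝ)} (hK : IsCompact K)
    (hne : K.Nonempty) (hconv : Convex ℝ K) (hpos : ∀ r ∈ K, ∀ i, 0 < r i) :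
    ∃ q ∈ K, ∀ r ∈ K, ∑ i, a i * (r i / q i) ≤ ∑ i, a i := by
  have hcont : ContinuousOn (fun r : ι → ℝ => ∑ i, a i * Real.log (r i)) K :=
    continuousOn_finsetSum _ fun i _ => continuousOn_const.mul
      ((continuous_apply i).continuousOn.log fun r hr => (hpos r hr i).ne')
  obtain ⟨q, hq, hmax⟩ := hK.exists_isMaxOn hne hcont
  refine ⟨q, hq, fun r hr => ?_⟩
  have hderiv : HasFDerivAt (fun r : ι → ℝ => ∑ i, a i * Real.log (r i))
      (∑ i, a i • (q i)⁻¹ • (ContinuousLinearMap.proj i : (ι → ℝ) →L[ℝ] ℝ)) q :=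
    HasFDerivAt.fun_sum fun i _ =>
      ((hasFDerivAt_apply i q).log (hpos q hq i).ne').const_mul (a i)
  have hcone : r - q ∈ posTangentConeAt K q :=
    sub_mem_posTangentConeAt_of_segment_subset (hconv.segment_subset hq hr)
  have hfirst := hmax.localize.hasFDerivWithinAt_nonpos hderiv.hasFDerivWithinAt hcone
  have hsplit : ∀ i, a i * (r i / q i) = a i * ((q i)⁻¹ * (r i - q i)) + a i := by
    intro i
    have := (hpos q hq i).ne'
    field_simp
    ring
  simp only [sum_apply, smul_apply, ContinuousLinearMap.proj_apply, Pi.sub_apply,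
    smul_eq_mul] at hfirst
  simp only [hsplit, Finset.sum_add_distrib]
  linarith

theorem exists_forall_sum_mul_div_add_const_le (a : ι → ℝ) {K : Set (ι → ℝ)} (hK : IsCompact K)
    (hne : K.Nonempty) (hconv : Convex ℝ K) (hnonneg : ∀ r ∈ K, ∀ i, 0 ≤ r i) {δ : ℝ}
    (hδ : 0 < δ) :
    ∃ q ∈ K, ∀ r ∈ K, ∑ i, a i * ((r i + δ) / (q i + δ)) ≤ ∑ i, a i := by
  let shift : (ι → ℝ) → ι → ℝ := fun r => (fun _ => δ) + r
  have hpos : ∀ r ∈ shift '' K, ∀ i, 0 < r i := by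
    rintro _ ⟨r, hr, rfl⟩ i
    exact add_pos_of_pos_of_nonneg hδ (hnonneg r hr i)
  obtain ⟨_, ⟨q, hq, rfl⟩, hopt⟩ := exists_forall_sum_mul_div_le a
    (hK.image (by fun_prop : Continuous shift)) (hne.image shift) (hconv.translate _) hpos
  refine ⟨q, hq, fun r hr => ?_⟩
  simpa only [shift, Pi.add_apply, add_comm δ] using hopt _ (Set.mem_image_of_mem shift hr)

theorem exists_pos_forall_sum_add_const_mul_le {K : Set (ι → ℝ)} (hK : Bornology.IsBounded K)
    {w : ι → ℝ} {b σ : ℝ} (hσ : 0 < σ) (h : ∀ r ∈ K, ∑ i, w i * r i + σ ≤ b) :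
    ∃ κ > 0, ∀ r ∈ K, ∑ i, (w i + κ) * r i ≤ b := by
  obtain ⟨R, hR⟩ := hK.exists_norm_le
  set S : ℝ := Fintype.card ι * |R| + 1
  have hS : 0 < S := by positivity
  have hsum_le : ∀ r ∈ K, ∑ i, r i ≤ S := fun r hr =>
    calc ∑ i, r i ≤ ∑ _i : ι, |R| := Finset.sum_le_sum fun i _ =>
          (le_abs_self _).trans (((norm_le_pi_norm r i).trans (hR r hr)).trans (le_abs_self R))
      _ = Fintype.card ι * |R| := by simp
      _ ≤ S := le_add_of_nonneg_right zero_le_one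
  refine ⟨σ / S, div_pos hσ hS, fun r hr => ?_⟩
  have hκ_le : σ / S * ∑ i, r i ≤ σ := by
    calc σ / S * ∑ i, r i ≤ σ / S * S := by
          gcongr
          exact hsum_le r hr
      _ = σ := div_mul_cancel₀ _ hS.ne'
  simp only [add_mul, Finset.sum_add_distrib, ← Finset.mul_sum]
  linarith [h r hr]

theorem exists_pos_weight_of_relGeomMean_lt (ha : ∀ i, 0 ≤ a i) (hsum : ∑ i, a i = 1)
    {K : Set (ι → ℝ)} (hK : IsCompact K) (hne : K.Nonempty) (hconv : Convex ℝ K)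
    (hnonneg : ∀ r ∈ K, ∀ i, 0 ≤ r i) {t : ℝ} (h : ∀ r ∈ K, relGeomMean a r < Real.exp t) :
    ∃ c : ι → ℝ, (∀ i, 0 < c i) ∧ (∀ r ∈ K, ∑ i, c i * r i ≤ 1) ∧
      -t < ∑ i, a i * Real.log (c i) := by
  obtain ⟨δ, hδ, hlt⟩ := exists_forall_relGeomMean_add_const_lt ha hK h
  obtain ⟨q, hq, hopt⟩ := exists_forall_sum_mul_div_add_const_le a hK hne hconv hnonneg hδ
  have hqδ : ∀ i, 0 < q i + δ := fun i => add_pos_of_nonneg_of_pos (hnonneg q hq i) hδ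
  set w : ι → ℝ := fun i => a i / (q i + δ)
  have hw : ∀ i, 0 ≤ w i := fun i => div_nonneg (ha i) (hqδ i).le
  have hwpos : 0 < ∑ i, w i := by
    obtain ⟨i, hi, hai⟩ := Finset.exists_ne_zero_of_sum_ne_zero (hsum.trans_ne one_ne_zero)
    exact Finset.sum_pos' (fun i _ => hw i) ⟨i, hi, div_pos ((ha i).lt_of_ne' hai) (hqδ i)⟩
  have hw_le : ∀ r ∈ K, ∑ i, w i * r i + δ * ∑ i, w i ≤ 1 := by
    intro r hr
    rw [Finset.mul_sum, ← Finset.sum_add_distrib, ← hsum]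
    refine le_of_eq_of_le (Finset.sum_congr rfl fun i _ => ?_) (hopt r hr)
    ring
  -- `w` vanishes where `a` does; the slack gained from the shift by `δ` pays for positivity.
  obtain ⟨κ, hκ, hκ_le⟩ :=
    exists_pos_forall_sum_add_const_mul_le hK.isBounded (mul_pos hδ hwpos) hw_le
  refine ⟨fun i => w i + κ, fun i => add_pos_of_nonneg_of_pos (hw i) hκ, hκ_le, ?_⟩
  have hq_lt : ∑ i, a i * Real.log ((q i + δ) / a i) < t := by
    have := hlt q hq
    rwa [relGeomMean_eq_exp fun i hi => div_pos (hqδ i) ((ha i).lt_of_ne' hi),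
      Real.exp_lt_exp] at this
  calc -t < ∑ i, a i * -Real.log ((q i + δ) / a i) := by
        simpa only [mul_neg, Finset.sum_neg_distrib] using neg_lt_neg hq_lt
    _ ≤ ∑ i, a i * Real.log (w i + κ) := by
        refine Finset.sum_le_sum fun i _ => ?_
        rcases (ha i).eq_or_lt with hi | hi
        · simp [← hi]
        · rw [← Real.log_inv, inv_div]
          gcongr
          · exact div_pos hi (hqδ i)
          · exact le_add_of_nonneg_right hκ.le

theorem exists_pos_weight_of_sum_entTerm_le (ha : ∀ i, 0 ≤ a i) (hsum : ∑ i, a i = 1)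
    {K : Set (ι → ℝ)} (hbdd : Bornology.IsBounded K) (hconv : Convex ℝ K)
    (hnonneg : ∀ r ∈ K, ∀ i, 0 ≤ r i) {s t : ℝ} (hst : s < t)
    (h : ∀ r ∈ K, ∑ i, entTerm (a i) (r i) ≤ s) :
    ∃ c : ι → ℝ, (∀ i, 0 < c i) ∧ (∀ r ∈ K, ∑ i, c i * r i ≤ 1) ∧
      -t < ∑ i, a i * Real.log (c i) := by
  rcases K.eq_empty_or_nonempty with rfl | hne
  · refine ⟨fun _ => Real.exp (1 - t), fun _ => Real.exp_pos _, by simp, ?_⟩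
    simp only [Real.log_exp, ← Finset.sum_mul, hsum]
    linarith
  have hnonneg' : ∀ r ∈ closure K, ∀ i, 0 ≤ r i := fun r hr i =>
    closure_minimal (fun r hr => hnonneg r hr i)
      (isClosed_le continuous_const (continuous_apply i)) hr
  have hle : ∀ r ∈ closure K, relGeomMean a r ≤ Real.exp s := fun r hr =>
    closure_minimal (fun r hr => relGeomMean_le_exp_of_sum_entTerm_le ha (hnonneg r hr) (h r hr))
      (isClosed_le (continuous_relGeomMean ha) continuous_const) hr
  obtain ⟨c, hc, hcK, hct⟩ := exists_pos_weight_of_relGeomMean_lt ha hsum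
    hbdd.isCompact_closure hne.closure hconv.closure hnonneg'
    fun r hr => (hle r hr).trans_lt (Real.exp_lt_exp.2 hst)
  exact ⟨c, hc, fun r hr => hcK r (subset_closure hr), hct⟩

end FiniteDimensional

section BoundedMeasurable

variable {X : Type*} [MeasurableSpace X]

theorem isBddMeas_const (c : ℝ) : IsBddMeas fun _ : X => c :=
  ⟨measurable_const, |c|, fun _ => le_rfl⟩

theorem IsBddMeas.comp_measurable {f : X → ℝ} (hf : IsBddMeas f) {β : X → X} (hβ : Measurable β) :
    IsBddMeas fun x => f (β x) :=
  ⟨hf.1.comp hβ, hf.2.imp fun _ hC x => hC (β x)⟩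

theorem IsBddMeas.const_mul {f : X → ℝ} (hf : IsBddMeas f) (c : ℝ) :
    IsBddMeas fun x => c * f x := by
  obtain ⟨hmeas, C, hC⟩ := hf
  refine ⟨hmeas.const_mul c, |c| * C, fun x => ?_⟩
  rw [abs_mul]
  exact mul_le_mul_of_nonneg_left (hC x) (abs_nonneg c)

theorem IsBddMeas.exp {f : X → ℝ} (hf : IsBddMeas f) : IsBddMeas fun x => Real.exp (f x) := by
  obtain ⟨hmeas, C, hC⟩ := hf
  refine ⟨hmeas.exp, Real.exp C, fun x => ?_⟩
  rw [Real.abs_exp, Real.exp_le_exp]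
  exact (le_abs_self _).trans (hC x)

theorem isBddMeas_finsetSum {ι : Type*} (s : Finset ι) {f : ι → X → ℝ}
    (hf : ∀ i ∈ s, IsBddMeas (f i)) : IsBddMeas fun x => ∑ i ∈ s, f i x := by
  choose! hmeas C hC using hf
  exact ⟨Finset.measurable_fun_sum s hmeas, ∑ i ∈ s, C i, fun x =>
    (Finset.abs_sum_le_sum_abs _ _).trans (Finset.sum_le_sum fun i hi => hC i hi x)⟩

theorem IsBddMeas.integrable_mul {m : Measure X} {h f : X → ℝ} (hh : IsBddMeas h)
    (hf : Integrable f m) : Integrable (fun x => h x * f x) m := by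
  obtain ⟨hmeas, C, hC⟩ := hh
  exact hf.bdd_mul hmeas.aestronglyMeasurable (Eventually.of_forall hC)

theorem IsBFunctional.map_sum_mul {μ : (X → ℝ) → ℝ} (hμ : IsBFunctional μ) {ι : Type*}
    (s : Finset ι) (c : ι → ℝ) {g : ι → X → ℝ} (hg : ∀ i ∈ s, IsBddMeas (g i)) :
    μ (fun x => ∑ i ∈ s, c i * g i x) = ∑ i ∈ s, c i * μ (g i) := by
  induction s using Finset.cons_induction with
  | empty =>
    have hzero := hμ.2.1 0 (fun _ => 0) (isBddMeas_const 0)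
    rw [zero_smul, zero_mul] at hzero
    exact hzero
  | cons j s hj ih =>
    have hgs : ∀ i ∈ s, IsBddMeas (g i) := fun i hi => hg i (Finset.mem_cons_of_mem hi)
    have hgj : IsBddMeas (g j) := hg j (Finset.mem_cons_self j s)
    have hcgj : IsBddMeas (c j • g j) := hgj.const_mul (c j)
    have hsplit : (fun x => ∑ i ∈ s.cons j hj, c i * g i x) =
        c j • g j + fun x => ∑ i ∈ s, c i * g i x := by
      ext x
      simp only [Finset.sum_cons, Pi.add_apply, Pi.smul_apply, smul_eq_mul]
    rw [hsplit, hμ.1 _ _ hcgj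
      (isBddMeas_finsetSum s fun i hi => (hgs i hi).const_mul (c i)), hμ.2.1 _ _ hgj, ih hgs,
      Finset.sum_cons]

end BoundedMeasurable

namespace BPartUnity

variable {X : Type*} [MeasurableSpace X]

theorem isBddMeas (D : BPartUnity X) (i : Fin D.k) : IsBddMeas (D.g i) := by
  refine ⟨D.meas i, 1, fun x => ?_⟩
  rw [abs_of_nonneg (D.nonneg i x), ← D.sum_one x]
  exact Finset.single_le_sum (fun j _ => D.nonneg j x) (Finset.mem_univ i)

theorem sum_apply_eq_one {α : X → X} {μ : (X → ℝ) → ℝ} (hμ : MemMalphaB α μ)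
    (D : BPartUnity X) : ∑ i, μ (D.g i) = 1 := by
  have hsum := hμ.1.map_sum_mul Finset.univ (fun _ => 1) fun i _ => D.isBddMeas i
  simp only [one_mul, D.sum_one] at hsum
  exact hsum.symm.trans hμ.2.2.1

/-- The partition of unity `{1}`. -/
protected def trivial (X : Type*) [MeasurableSpace X] : BPartUnity X where
  k := 1
  g := fun _ _ => 1
  meas := fun _ => measurable_const
  nonneg := fun _ _ => zero_le_one
  sum_one := fun _ => by simp

end BPartUnity

section Birkhoff

variable {X : Type*} {α : X → X} {φ : X → ℝ}

theorem birkhoff_eq_birkhoffSum (α : X → X) (φ : X → ℝ) (n : ℕ) :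
    birkhoff α φ n = birkhoffSum α φ n :=
  rfl

theorem IsBddMeas.birkhoff [MeasurableSpace X] (hα : Measurable α) (hφ : IsBddMeas φ) (n : ℕ) :
    IsBddMeas (birkhoff α φ n) :=
  isBddMeas_finsetSum _ fun i _ => hφ.comp_measurable (hα.iterate i)

theorem abs_birkhoff_le {b : ℝ} (hb : ∀ x, |φ x| ≤ b) (n : ℕ) (x : X) :
    |birkhoff α φ n x| ≤ n * b := by
  calc |birkhoff α φ n x| ≤ ∑ i ∈ Finset.range n, |φ (α^[i] x)| :=
        Finset.abs_sum_le_sum_abs _ _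
    _ ≤ ∑ _i ∈ Finset.range n, b := Finset.sum_le_sum fun i _ => hb _
    _ = n * b := by simp

theorem abs_birkhoff_comp_sub_birkhoff_le {b : ℝ} (hb : ∀ x, |φ x| ≤ b) (n : ℕ)
    (x : X) : |birkhoff α (φ ∘ α) n x - birkhoff α φ n x| ≤ 2 * b := by
  have htelescope : birkhoff α (φ ∘ α) n x - birkhoff α φ n x = φ (α^[n] x) - φ x := by
    rw [← birkhoffSum_apply_sub_birkhoffSum, birkhoff_eq_birkhoffSum, birkhoff_eq_birkhoffSum]
    simp only [birkhoffSum, Function.comp_apply, ← Function.iterate_succ_apply',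
      Function.iterate_succ_apply]
  rw [htelescope, two_mul]
  exact (abs_sub _ _).trans (add_le_add (hb _) (hb _))

theorem birkhoff_mul_eq_sum (α : X → X) (φ : X → ℝ) (N p : ℕ) (x : X) :
    birkhoff α φ (N * p) x = ∑ j ∈ Finset.range N, birkhoff α^[N] φ p (α^[j] x) := by
  simp only [birkhoff]
  rw [Finset.sum_comm]
  induction p with
  | zero => simp
  | succ p ih =>
    rw [mul_add_one, Finset.sum_range_add, ih, Finset.sum_range_succ]
    simp only [← Function.iterate_mul, ← Function.iterate_add_apply]

theorem exp_birkhoff_div_le {b : ℝ} (hb : ∀ x, |φ x| ≤ b) {N p n : ℕ} (hN : 0 < N)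
    (hle : N * p ≤ n) (hge : n ≤ N * p + 2 * N) (x : X) :
    Real.exp (birkhoff α φ n x / N) ≤ Real.exp (2 * b) *
      ∑ j ∈ Finset.range N, (N : ℝ)⁻¹ * Real.exp (birkhoff α^[N] φ p (α^[j] x)) := by
  obtain ⟨d, rfl⟩ := Nat.exists_eq_add_of_le hle
  have hNpos : (0 : ℝ) < N := by exact_mod_cast hN
  have hb0 : 0 ≤ b := (abs_nonneg _).trans (hb x)
  have hrest : birkhoff α φ d (α^[N * p] x) / N ≤ 2 * b := by
    have hd : (d : ℝ) ≤ 2 * N := by exact_mod_cast (by omega : d ≤ 2 * N)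
    rw [div_le_iff₀ hNpos]
    calc birkhoff α φ d (α^[N * p] x) ≤ d * b := (le_abs_self _).trans (abs_birkhoff_le hb d _)
      _ ≤ 2 * N * b := by gcongr
      _ = 2 * b * N := by ring
  have hjensen : Real.exp (birkhoff α φ (N * p) x / N) ≤
      ∑ j ∈ Finset.range N, (N : ℝ)⁻¹ * Real.exp (birkhoff α^[N] φ p (α^[j] x)) := by
    rw [birkhoff_mul_eq_sum, div_eq_inv_mul, Finset.mul_sum]
    exact convexOn_exp.map_sum_le (fun _ _ => by positivity) (by simp [hNpos.ne'])
      fun _ _ => Set.mem_univ _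
  rw [birkhoff_eq_birkhoffSum, birkhoffSum_add, add_div, add_comm, Real.exp_add]
  exact mul_le_mul (Real.exp_le_exp.2 hrest) hjensen (Real.exp_pos _).le (Real.exp_pos _).le

end Birkhoff

section Transfer

variable {X : Type*} [MeasurableSpace X] {m : Measure X} {β : X → X} {C : ℝ≥0}

theorem ShiftBounded.exists_map_le_smul (hβ : Measurable β) (h : ShiftBounded m β) :
    ∃ C : ℝ≥0, 1 ≤ C ∧ m.map β ≤ C • m := by
  obtain ⟨C, -, hC⟩ := h
  refine ⟨max C 1, le_max_right C 1, Measure.le_iff.2 fun s hs => ?_⟩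
  calc m.map β s = m (β ⁻¹' s) := Measure.map_apply hβ hs
    _ ≤ C * m s := hC s hs
    _ ≤ (max C 1 : ℝ≥0) * m s := by gcongr; exact le_max_left C 1

theorem map_iterate_le_smul (hβ : Measurable β) (hC : m.map β ≤ C • m) (n : ℕ) :
    m.map β^[n] ≤ C ^ n • m := by
  induction n with
  | zero => simp
  | succ n ih =>
    calc m.map β^[n + 1] = (m.map β).map β^[n] := (Measure.map_map (hβ.iterate n) hβ).symm
      _ ≤ (C • m).map β^[n] := Measure.map_mono hC (hβ.iterate n)
      _ = C • m.map β^[n] := Measure.map_smul ..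
      _ ≤ C • C ^ n • m := by gcongr
      _ = C ^ (n + 1) • m := by rw [smul_smul, pow_succ']

theorem integrable_comp_of_map_le_smul (hβ : Measurable β) (hC : m.map β ≤ C • m) {f : X → ℝ}
    (hf : Integrable f m) : Integrable (fun x => f (β x)) m :=
  (hf.smul_measure_nnreal.mono_measure hC).comp_measurable hβ

theorem integral_abs_comp_le (hβ : Measurable β) (hC : m.map β ≤ C • m) {f : X → ℝ}
    (hf : Integrable f m) : ∫ x, |f (β x)| ∂m ≤ C * ∫ x, |f x| ∂m := by
  have hfC : Integrable f (C • m) := hf.smul_measure_nnreal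
  calc ∫ x, |f (β x)| ∂m = ∫ x, |f x| ∂(m.map β) :=
        (integral_map hβ.aemeasurable (hfC.mono_measure hC).abs.aestronglyMeasurable).symm
    _ ≤ ∫ x, |f x| ∂(C • m) :=
        integral_mono_measure hC (Eventually.of_forall fun _ => abs_nonneg _) hfC.abs
    _ = C * ∫ x, |f x| ∂m := integral_smul_nnreal_measure _ _

theorem integral_abs_comp_iterate_le (hβ : Measurable β) (hC : m.map β ≤ C • m) (n : ℕ)
    {f : X → ℝ} (hf : Integrable f m) : ∫ x, |f (β^[n] x)| ∂m ≤ C ^ n * ∫ x, |f x| ∂m :=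
  mod_cast integral_abs_comp_le (hβ.iterate n) (map_iterate_le_smul hβ hC n) hf

theorem integrable_comp_iterate (hβ : Measurable β) (hC : m.map β ≤ C • m) (n : ℕ)
    {f : X → ℝ} (hf : Integrable f m) : Integrable (fun x => f (β^[n] x)) m :=
  integrable_comp_of_map_le_smul (hβ.iterate n) (map_iterate_le_smul hβ hC n) hf

theorem integral_mul_abs_comp_le_of_forall_integral_eq_one (hβ : Measurable β)
    (hC : m.map β ≤ C • m) {w : X → ℝ}
    (h : ∀ f : X → ℝ, Integrable f m → ∫ x, |f x| ∂m = 1 → ∫ x, w x * |f (β x)| ∂m ≤ 1)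
    {f : X → ℝ} (hf : Integrable f m) : ∫ x, w x * |f (β x)| ∂m ≤ ∫ x, |f x| ∂m := by
  rcases (integral_nonneg fun x => abs_nonneg (f x) : 0 ≤ ∫ x, |f x| ∂m).eq_or_lt with hI | hI
  · have hcomp : ∫ x, |f (β x)| ∂m = 0 :=
      le_antisymm (by simpa [← hI] using integral_abs_comp_le hβ hC hf)
        (integral_nonneg fun _ => abs_nonneg _)
    rw [integral_eq_zero_iff_of_nonneg (fun _ => abs_nonneg _)
      (integrable_comp_of_map_le_smul hβ hC hf).abs] at hcomp
    rw [← hI]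
    refine (integral_eq_zero_of_ae ?_).le
    filter_upwards [hcomp] with x hx
    exact mul_eq_zero_of_right _ hx
  · set I := ∫ x, |f x| ∂m
    have habs : ∀ y, |I⁻¹ * f y| = I⁻¹ * |f y| := fun y => by
      rw [abs_mul, abs_of_pos (inv_pos.2 hI)]
    have hscaled := h (fun x => I⁻¹ * f x) (hf.const_mul _)
      (by simp only [habs, integral_const_mul]; exact inv_mul_cancel₀ hI.ne')
    simp only [habs, mul_left_comm (w _), integral_const_mul] at hscaled
    rwa [inv_mul_le_iff₀ hI, mul_one] at hscaled

end Transfer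

section ContractiveWeight

variable {X : Type*} [MeasurableSpace X] {m : Measure X} {α β : X → X} {ψ : X → ℝ} {C : ℝ≥0}

/-- The weighted shift operator `f ↦ exp ψ · (f ∘ β)` on `L¹(X, m)` has norm at most `1`. -/
def IsContractiveWeight (m : Measure X) (β : X → X) (ψ : X → ℝ) : Prop :=
  ∀ f : X → ℝ, Integrable f m → ∫ x, Real.exp (ψ x) * |f (β x)| ∂m ≤ ∫ x, |f x| ∂m

theorem IsContractiveWeight.iterate (hβ : Measurable β) (hC : m.map β ≤ C • m)
    (hψ : IsBddMeas ψ) (h : IsContractiveWeight m β ψ) (p : ℕ) :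
    IsContractiveWeight m β^[p] (birkhoff β ψ p) := by
  induction p with
  | zero => simp [IsContractiveWeight, birkhoff]
  | succ p ih =>
    intro f hf
    set F : X → ℝ := fun x => Real.exp (birkhoff β ψ p x) * f (β^[p] x)
    have hF : Integrable F m :=
      (hψ.birkhoff hβ p).exp.integrable_mul (integrable_comp_iterate hβ hC p hf)
    have habs : ∀ x, |F x| = Real.exp (birkhoff β ψ p x) * |f (β^[p] x)| := fun x => by
      rw [abs_mul, Real.abs_exp]
    calc ∫ x, Real.exp (birkhoff β ψ (p + 1) x) * |f (β^[p + 1] x)| ∂m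
        = ∫ x, Real.exp (ψ x) * |F (β x)| ∂m := by
          simp only [birkhoff_eq_birkhoffSum, birkhoffSum_succ', Real.exp_add, habs, mul_assoc,
            Function.iterate_succ_apply]
      _ ≤ ∫ x, |F x| ∂m := h F hF
      _ ≤ ∫ x, |f x| ∂m := by simpa only [habs] using ih f hf

theorem IsContractiveWeight.integral_exp_birkhoff_comp_iterate_le (hα : Measurable α)
    (hC : m.map α ≤ C • m) (hψ : IsBddMeas ψ) {N : ℕ} (h : IsContractiveWeight m α^[N] ψ)
    {p j n : ℕ} (hn : N * p + j ≤ n) {f : X → ℝ} (hf : Integrable f m) :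
    ∫ x, Real.exp (birkhoff α^[N] ψ p (α^[j] x)) * |f (α^[n] x)| ∂m ≤
      C ^ (n - N * p) * ∫ x, |f x| ∂m := by
  obtain ⟨l, rfl⟩ := Nat.exists_eq_add_of_le' hn
  have hfl : Integrable (fun x => f (α^[l] x)) m := integrable_comp_iterate hα hC l hf
  set F : X → ℝ := fun x => Real.exp (birkhoff α^[N] ψ p x) * f (α^[l] ((α^[N])^[p] x))
  have hF : Integrable F m := (hψ.birkhoff (hα.iterate N) p).exp.integrable_mul
    (integrable_comp_iterate (hα.iterate N) (map_iterate_le_smul hα hC N) p hfl)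
  have habs : ∀ x, |F x| =
      Real.exp (birkhoff α^[N] ψ p x) * |f (α^[l] ((α^[N])^[p] x))| := fun x => by
    rw [abs_mul, Real.abs_exp]
  calc ∫ x, Real.exp (birkhoff α^[N] ψ p (α^[j] x)) * |f (α^[l + (N * p + j)] x)| ∂m
      = ∫ x, |F (α^[j] x)| ∂m := by
        simp only [habs, Function.iterate_add_apply, Function.iterate_mul]
    _ ≤ C ^ j * ∫ x, |F x| ∂m := integral_abs_comp_iterate_le hα hC j hF
    _ ≤ C ^ j * ∫ x, |f (α^[l] x)| ∂m := by
        refine mul_le_mul_of_nonneg_left ?_ (by positivity)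
        simpa only [habs] using
          h.iterate (hα.iterate N) (map_iterate_le_smul hα hC N) hψ p _ hfl
    _ ≤ C ^ j * (C ^ l * ∫ x, |f x| ∂m) := by
        gcongr
        exact integral_abs_comp_iterate_le hα hC l hf
    _ = C ^ (l + (N * p + j) - N * p) * ∫ x, |f x| ∂m := by
        rw [← mul_assoc, ← pow_add]
        congr 2
        omega

theorem integral_exp_birkhoff_div_mul_le (hα : Measurable α) (hψ : Measurable ψ) {b : ℝ}
    (hb : ∀ x, |ψ x| ≤ b) {N p n : ℕ} (hN : 0 < N) (hle : N * p ≤ n) (hge : n ≤ N * p + 2 * N)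
    {g : X → ℝ} (hg : Integrable g m) (hg0 : ∀ x, 0 ≤ g x) {M : ℝ}
    (hM : ∀ j < N, ∫ x, Real.exp (birkhoff α^[N] ψ p (α^[j] x)) * g x ∂m ≤ M) :
    ∫ x, Real.exp (birkhoff α ψ n x / N) * g x ∂m ≤ Real.exp (2 * b) * M := by
  have hbdd : IsBddMeas ψ := ⟨hψ, b, hb⟩
  have hint : ∀ j ∈ Finset.range N, Integrable
      (fun x => (N : ℝ)⁻¹ * (Real.exp (birkhoff α^[N] ψ p (α^[j] x)) * g x)) m := fun j _ =>
    (((hbdd.birkhoff (hα.iterate N) p).comp_measurable (hα.iterate j)).exp.integrable_mul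
      hg).const_mul _
  calc ∫ x, Real.exp (birkhoff α ψ n x / N) * g x ∂m
      ≤ ∫ x, Real.exp (2 * b) * ∑ j ∈ Finset.range N,
          (N : ℝ)⁻¹ * (Real.exp (birkhoff α^[N] ψ p (α^[j] x)) * g x) ∂m := by
        refine integral_mono ?_ ((integrable_finsetSum _ hint).const_mul _) fun x => ?_
        · simp only [div_eq_inv_mul]
          exact ((hbdd.birkhoff hα n).const_mul _).exp.integrable_mul hg
        · simpa only [mul_assoc, Finset.sum_mul] using
            mul_le_mul_of_nonneg_right (exp_birkhoff_div_le hb hN hle hge x) (hg0 x)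
    _ = Real.exp (2 * b) * ∑ j ∈ Finset.range N, (N : ℝ)⁻¹ *
          ∫ x, Real.exp (birkhoff α^[N] ψ p (α^[j] x)) * g x ∂m := by
        simp only [integral_const_mul, integral_finsetSum _ hint]
    _ ≤ Real.exp (2 * b) * ∑ _j ∈ Finset.range N, (N : ℝ)⁻¹ * M := by
        gcongr with j hj
        exact hM j (Finset.mem_range.1 hj)
    _ = Real.exp (2 * b) * M := by
        rw [Finset.sum_const, Finset.card_range, nsmul_eq_mul,
          mul_inv_cancel_left₀ (Nat.cast_ne_zero.2 hN.ne')]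

theorem IsContractiveWeight.exists_integral_exp_birkhoff_div_le (hα : Measurable α)
    (hC1 : 1 ≤ C) (hC : m.map α ≤ C • m) (hψ : IsBddMeas ψ) {N : ℕ} (hN : 0 < N)
    (h : IsContractiveWeight m α^[N] ψ) :
    ∃ K > 0, ∀ (n : ℕ) (f : X → ℝ), Integrable f m →
      ∫ x, Real.exp (birkhoff α ψ n x / N) * |f (α^[n] x)| ∂m ≤ K * ∫ x, |f x| ∂m := by
  obtain ⟨b, hb⟩ := hψ.2
  refine ⟨Real.exp (2 * b) * C ^ (2 * N), by positivity, fun n f hf => ?_⟩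
  rw [mul_assoc]
  -- One block fewer than fits into `n`, so that all `N` shifted blocks stay inside `[0, n)`.
  set p := n / N - 1
  have hn : n < N * p + 2 * N := by
    calc n < N * (n / N + 1) := Nat.lt_mul_div_succ n hN
      _ ≤ N * (p + 2) := Nat.mul_le_mul_left N (by omega)
      _ = N * p + 2 * N := by ring
  have hle : N * p ≤ n := (Nat.mul_le_mul_left N (Nat.sub_le _ _)).trans (Nat.mul_div_le n N)
  refine integral_exp_birkhoff_div_mul_le hα hψ.1 hb hN hle hn.le
    (integrable_comp_iterate hα hC n hf).abs (fun _ => abs_nonneg _) fun j hj => ?_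
  have hpow : (C : ℝ) ^ (n - N * p) ≤ C ^ (2 * N) :=
    pow_le_pow_right₀ (mod_cast hC1) (by omega)
  refine le_trans ?_ (mul_le_mul_of_nonneg_right hpow (integral_nonneg fun _ => abs_nonneg _))
  rcases Nat.eq_zero_or_pos p with hp | hp
  · simpa [hp, birkhoff] using integral_abs_comp_iterate_le hα hC n hf
  · refine h.integral_exp_birkhoff_comp_iterate_le hα hC hψ ?_ hf
    calc N * p + j ≤ N * (p + 1) := by rw [mul_add_one]; gcongr
      _ = N * (n / N) := by rw [Nat.sub_add_cancel (by omega)]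
      _ ≤ n := Nat.mul_div_le n N

end ContractiveWeight

section LocalGrowth

variable {X : Type*} [MeasurableSpace X] {m : Measure X} {α : X → X} {μ : (X → ℝ) → ℝ}

/-- The set `Xₙ(O(μ))` of points whose empirical measure `δ_{x,n}` lies in the basic weak-*
neighbourhood of `μ` given by the test functions `φs` and the tolerance `η`. -/
def empiricalNhd {X ι : Type*} (α : X → X) (μ : (X → ℝ) → ℝ) (φs : ι → X → ℝ) (η : ℝ) (n : ℕ) :
    Set X :=
  {x | ∀ i, |birkhoff α (φs i) n x / n - μ (φs i)| < η}

theorem measurableSet_empiricalNhd {ι : Type*} [Countable ι] (hα : Measurable α)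
    (μ : (X → ℝ) → ℝ) {φs : ι → X → ℝ} (hφs : ∀ i, IsBddMeas (φs i)) (η : ℝ) (n : ℕ) :
    MeasurableSet (empiricalNhd α μ φs η n) := by
  simp only [empiricalNhd, Set.ofPred_forall]
  exact MeasurableSet.iInter fun i => measurableSet_lt
    ((((hφs i).birkhoff hα n).1.div_const _).sub_const _).abs measurable_const

/-- On a suitable basic weak-* neighbourhood of `μ` the shift operator grows with exponential rate
at most `t`. -/
def LocalGrowthLE (m : Measure X) (α : X → X) (μ : (X → ℝ) → ℝ) (t : ℝ) : Prop :=
  ∃ (k : ℕ) (φs : Fin k → X → ℝ) (_ : ∀ i, IsBddMeas (φs i)) (η : ℝ) (_ : 0 < η)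
    (C : ℝ) (_ : 0 < C), ∀ n : ℕ, 0 < n → ∀ f : X → ℝ, Integrable f m →
      ∫ x in empiricalNhd α μ φs η n, |f (α^[n] x)| ∂m ≤
        C * Real.exp (n * t) * ∫ x, |f x| ∂m

theorem one_le_exp_mul_exp_birkhoff_div {X : Type*} {α : X → X} {μ : (X → ℝ) → ℝ} {ι : Type*}
    [Nonempty ι] {ψ : X → ℝ} {N n : ℕ} (hN : 0 < N) (hn : 0 < n) {t : ℝ} {x : X}
    (hx : x ∈ empiricalNhd α μ (fun _ : ι => ψ) (N * t + μ ψ) n) :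
    1 ≤ Real.exp (n * t) * Real.exp (birkhoff α ψ n x / N) := by
  have hnpos : (0 : ℝ) < n := by exact_mod_cast hn
  have hNpos : (0 : ℝ) < N := by exact_mod_cast hN
  have hmean : -(N * t) < birkhoff α ψ n x / n := by
    linarith [(abs_lt.1 (hx (Classical.arbitrary ι))).1]
  rw [lt_div_iff₀ hnpos] at hmean
  have hlow : -(n * t) ≤ birkhoff α ψ n x / N := by
    rw [le_div_iff₀ hNpos]
    linarith
  rw [← Real.exp_add, Real.one_le_exp_iff]
  linarith

/-- Chebyshev's inequality for the weight `exp (birkhoff α ψ n x / N)`, with `ψ` as the only test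
function. -/
theorem localGrowthLE_of_isContractiveWeight (hα : Measurable α) (hbdd : ShiftBounded m α)
    {ψ : X → ℝ} (hψ : IsBddMeas ψ) {N : ℕ} (hN : 0 < N) (h : IsContractiveWeight m α^[N] ψ)
    {t : ℝ} (ht : -(N * t) < μ ψ) : LocalGrowthLE m α μ t := by
  obtain ⟨C, hC1, hC⟩ := hbdd.exists_map_le_smul hα
  obtain ⟨K, hK, hKle⟩ := h.exists_integral_exp_birkhoff_div_le hα hC1 hC hψ hN
  refine ⟨1, fun _ => ψ, fun _ => hψ, N * t + μ ψ, by linarith, K, hK, fun n hn f hf => ?_⟩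
  set O := empiricalNhd α μ (fun _ : Fin 1 => ψ) (N * t + μ ψ) n
  have hfn : Integrable (fun x => |f (α^[n] x)|) m := (integrable_comp_iterate hα hC n hf).abs
  have hint : Integrable
      (fun x => Real.exp (n * t) * (Real.exp (birkhoff α ψ n x / N) * |f (α^[n] x)|)) m := by
    simp only [div_eq_inv_mul]
    exact (((hψ.birkhoff hα n).const_mul _).exp.integrable_mul hfn).const_mul _
  calc ∫ x in O, |f (α^[n] x)| ∂m
      ≤ ∫ x in O, Real.exp (n * t) * (Real.exp (birkhoff α ψ n x / N) * |f (α^[n] x)|) ∂m :=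
        setIntegral_mono_on hfn.integrableOn hint.integrableOn
          (measurableSet_empiricalNhd hα μ (fun _ => hψ) _ n) fun x hx => by
            rw [← mul_assoc]
            exact le_mul_of_one_le_left (abs_nonneg _) (one_le_exp_mul_exp_birkhoff_div hN hn hx)
    _ ≤ ∫ x, Real.exp (n * t) * (Real.exp (birkhoff α ψ n x / N) * |f (α^[n] x)|) ∂m :=
        setIntegral_le_integral hint (Eventually.of_forall fun _ => by positivity)
    _ ≤ Real.exp (n * t) * (K * ∫ x, |f x| ∂m) := by
        rw [integral_const_mul]
        exact mul_le_mul_of_nonneg_left (hKle n f hf) (Real.exp_pos _).le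
    _ = K * Real.exp (n * t) * ∫ x, |f x| ∂m := by ring

end LocalGrowth

section Entropy

variable {X : Type*} [MeasurableSpace X] {m : Measure X} {α β : X → X} {μ : (X → ℝ) → ℝ}
  {C : ℝ≥0} {D : BPartUnity X} {f : X → ℝ}

/-- The masses `∫ gᵢ · |f ∘ β| dm` which `|f ∘ β|` gives to the members of `D`. -/
def partMass (m : Measure X) (β : X → X) (D : BPartUnity X) (f : X → ℝ) (i : Fin D.k) : ℝ :=
  ∫ x, D.g i x * |f (β x)| ∂m

theorem partMass_nonneg (i : Fin D.k) : 0 ≤ partMass m β D f i :=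
  integral_nonneg fun x => mul_nonneg (D.nonneg i x) (abs_nonneg _)

theorem sum_mul_partMass (hβ : Measurable β) (hC : m.map β ≤ C • m) (hf : Integrable f m)
    (c : Fin D.k → ℝ) :
    ∑ i, c i * partMass m β D f i = ∫ x, (∑ i, c i * D.g i x) * |f (β x)| ∂m := by
  have hint : ∀ i ∈ Finset.univ, Integrable (fun x => c i * (D.g i x * |f (β x)|)) m := fun i _ =>
    ((D.isBddMeas i).integrable_mul (integrable_comp_of_map_le_smul hβ hC hf).abs).const_mul _
  simp only [Finset.sum_mul, mul_assoc, integral_finsetSum _ hint, integral_const_mul, partMass]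

theorem sum_partMass (hβ : Measurable β) (hC : m.map β ≤ C • m) (hf : Integrable f m) :
    ∑ i, partMass m β D f i = ∫ x, |f (β x)| ∂m := by
  simpa [D.sum_one] using sum_mul_partMass (D := D) hβ hC hf fun _ => 1

/-- The mass vectors of the unit sphere of `L¹(X, m)`. -/
def unitPartMasses (m : Measure X) (β : X → X) (D : BPartUnity X) : Set (Fin D.k → ℝ) :=
  partMass m β D '' {f | Integrable f m ∧ ∫ x, |f x| ∂m = 1}

theorem nonneg_of_mem_unitPartMasses {r : Fin D.k → ℝ} (hr : r ∈ unitPartMasses m β D)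
    (i : Fin D.k) : 0 ≤ r i := by
  obtain ⟨f, -, rfl⟩ := hr
  exact partMass_nonneg i

theorem isBounded_unitPartMasses (hβ : Measurable β) (hC : m.map β ≤ C • m)
    (D : BPartUnity X) : Bornology.IsBounded (unitPartMasses m β D) := by
  refine (Metric.isBounded_Icc (fun _ => (0 : ℝ)) fun _ => (C : ℝ)).subset ?_
  rintro _ ⟨f, ⟨hf, hf1⟩, rfl⟩
  refine ⟨partMass_nonneg, fun i => ?_⟩
  calc partMass m β D f i ≤ ∑ j, partMass m β D f j :=
        Finset.single_le_sum (fun j _ => partMass_nonneg j) (Finset.mem_univ i)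
    _ = ∫ x, |f (β x)| ∂m := sum_partMass hβ hC hf
    _ ≤ C := by simpa [hf1] using integral_abs_comp_le hβ hC hf

/-- `partMass` is linear in `|f|`, so the convex combination is taken of the absolute values. -/
theorem convex_unitPartMasses (hβ : Measurable β) (hC : m.map β ≤ C • m) (D : BPartUnity X) :
    Convex ℝ (unitPartMasses m β D) := by
  rintro _ ⟨f, ⟨hf, hf1⟩, rfl⟩ _ ⟨g, ⟨hg, hg1⟩, rfl⟩ a b ha hb hab
  have habs : ∀ y, |(a * |f y| + b * |g y|)| = a * |f y| + b * |g y| := fun y =>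
    abs_of_nonneg (by positivity)
  refine ⟨fun y => a * |f y| + b * |g y|,
    ⟨(hf.abs.const_mul a).add (hg.abs.const_mul b), ?_⟩, funext fun i => ?_⟩
  · simp only [habs]
    rw [integral_add (hf.abs.const_mul a) (hg.abs.const_mul b), integral_const_mul,
      integral_const_mul, hf1, hg1, mul_one, mul_one, hab]
  · have hfi := (D.isBddMeas i).integrable_mul (integrable_comp_of_map_le_smul hβ hC hf).abs
    have hgi := (D.isBddMeas i).integrable_mul (integrable_comp_of_map_le_smul hβ hC hg).abs
    simp only [partMass, habs, mul_add, mul_left_comm (D.g i _), Pi.add_apply, Pi.smul_apply,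
      smul_eq_mul]
    rw [integral_add (hfi.const_mul a) (hgi.const_mul b), integral_const_mul, integral_const_mul]

theorem sum_entTerm_le_tauNB {n : ℕ} {r : Fin D.k → ℝ} (hr : r ∈ unitPartMasses m α^[n] D) :
    ∑ i, entTerm (μ (D.g i)) (r i) ≤ tauNB m α μ n D := by
  obtain ⟨f, ⟨hf, hf1⟩, rfl⟩ := hr
  exact le_sSup ⟨f, hf, hf1, rfl⟩

theorem exp_sum_log_mul_le (D : BPartUnity X) {c : Fin D.k → ℝ} (hc : ∀ i, 0 < c i) (x : X) :
    Real.exp (∑ i, Real.log (c i) * D.g i x) ≤ ∑ i, c i * D.g i x := by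
  have hjensen := convexOn_exp.map_sum_le (t := Finset.univ) (w := fun i => D.g i x)
    (p := fun i => Real.log (c i)) (fun i _ => D.nonneg i x) (D.sum_one x)
    fun _ _ => Set.mem_univ _
  simpa only [smul_eq_mul, Real.exp_log (hc _), mul_comm (D.g _ x)] using hjensen

theorem isContractiveWeight_sum_log_mul (hβ : Measurable β) (hC : m.map β ≤ C • m)
    {c : Fin D.k → ℝ} (hc : ∀ i, 0 < c i)
    (h : ∀ r ∈ unitPartMasses m β D, ∑ i, c i * r i ≤ 1) :
    IsContractiveWeight m β fun x => ∑ i, Real.log (c i) * D.g i x := by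
  have hψ : IsBddMeas fun x => ∑ i, Real.log (c i) * D.g i x :=
    isBddMeas_finsetSum _ fun i _ => (D.isBddMeas i).const_mul _
  have hw : IsBddMeas fun x => ∑ i, c i * D.g i x :=
    isBddMeas_finsetSum _ fun i _ => (D.isBddMeas i).const_mul _
  refine fun f hf =>
    integral_mul_abs_comp_le_of_forall_integral_eq_one hβ hC (fun f hf hf1 => ?_) hf
  have hfβ := (integrable_comp_of_map_le_smul hβ hC hf).abs
  calc ∫ x, Real.exp (∑ i, Real.log (c i) * D.g i x) * |f (β x)| ∂m
      ≤ ∫ x, (∑ i, c i * D.g i x) * |f (β x)| ∂m :=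
        integral_mono (hψ.exp.integrable_mul hfβ) (hw.integrable_mul hfβ) fun x =>
          mul_le_mul_of_nonneg_right (exp_sum_log_mul_le D hc x) (abs_nonneg _)
    _ = ∑ i, c i * partMass m β D f i := (sum_mul_partMass hβ hC hf c).symm
    _ ≤ 1 := h _ ⟨f, ⟨hf, hf1⟩, rfl⟩

theorem exists_isContractiveWeight_of_tauNB_lt (hα : Measurable α) (hbdd : ShiftBounded m α)
    (hμ : MemMalphaB α μ) {n : ℕ} {T : ℝ} (hT : tauNB m α μ n D < T) :
    ∃ ψ, IsBddMeas ψ ∧ IsContractiveWeight m α^[n] ψ ∧ -T < μ ψ := by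
  obtain ⟨C, -, hC⟩ := hbdd.exists_map_le_smul hα
  have hCn := map_iterate_le_smul hα hC n
  obtain ⟨s, hs, hsT⟩ := EReal.lt_iff_exists_real_btwn.1 hT
  obtain ⟨c, hc, hcle, hcT⟩ := exists_pos_weight_of_sum_entTerm_le
    (fun i => hμ.2.1 _ (D.isBddMeas i) (D.nonneg i)) (D.sum_apply_eq_one hμ)
    (isBounded_unitPartMasses (hα.iterate n) hCn D) (convex_unitPartMasses (hα.iterate n) hCn D)
    (fun _ hr => nonneg_of_mem_unitPartMasses hr) (EReal.coe_lt_coe_iff.1 hsT)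
    fun _ hr => (sum_entTerm_le_tauNB hr).trans hs.le
  refine ⟨fun x => ∑ i, Real.log (c i) * D.g i x,
    isBddMeas_finsetSum _ fun i _ => (D.isBddMeas i).const_mul _,
    isContractiveWeight_sum_log_mul (hα.iterate n) hCn hc hcle, ?_⟩
  rw [hμ.1.map_sum_mul _ _ fun i _ => D.isBddMeas i]
  simpa only [mul_comm] using hcT

theorem exists_tauNB_lt_of_tEntropyB_lt {t : ℝ} (ht : tEntropyB m α μ < t) :
    ∃ n : ℕ, 0 < n ∧ ∃ D, tauNB m α μ n D < ((n * t : ℝ) : EReal) := by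
  simp only [tEntropyB, iInf_lt_iff] at ht
  obtain ⟨n, hn, D, hlt⟩ := ht
  refine ⟨n, hn, D, ?_⟩
  rwa [EReal.coe_inv, ← EReal.div_eq_inv_mul, EReal.div_lt_iff (by exact_mod_cast hn)
    (EReal.coe_ne_top _), ← EReal.coe_mul, mul_comm t] at hlt

theorem entTerm_one_le_log {r c : ℝ} (hr : 0 ≤ r) (hrc : r ≤ c) :
    entTerm 1 r ≤ (Real.log c : EReal) := by
  rcases hr.eq_or_lt with rfl | hr
  · simp [entTerm]
  · simpa [entTerm, hr.ne'] using Real.log_le_log hr hrc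

theorem tauNB_one_trivial_le_log (hα : Measurable α) (hC : m.map α ≤ C • m)
    (hμ : μ (fun _ => 1) = 1) : tauNB m α μ 1 (BPartUnity.trivial X) ≤ (Real.log C : EReal) := by
  refine sSup_le ?_
  rintro _ ⟨f, hf, hf1, rfl⟩
  have hle : ∫ x, |f (α x)| ∂m ≤ C := by simpa [hf1] using integral_abs_comp_le hα hC hf
  refine (Fin.sum_univ_one _).trans_le ?_
  simpa [BPartUnity.trivial, hμ] using
    entTerm_one_le_log (integral_nonneg fun _ => abs_nonneg _) hle

theorem tEntropyBExt_ne_top (hα : Measurable α) (hbdd : ShiftBounded m α) (μ : (X → ℝ) → ℝ) :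
    tEntropyBExt m α μ ≠ ⊤ := by
  rw [tEntropyBExt]
  split_ifs with hμ
  · obtain ⟨C, -, hC⟩ := hbdd.exists_map_le_smul hα
    refine ((iInf₂_le_of_le 1 one_pos (iInf_le _ (BPartUnity.trivial X))).trans_lt ?_).ne
    rw [Nat.cast_one, inv_one, EReal.coe_one, one_mul]
    exact (tauNB_one_trivial_le_log hα hC hμ.2.2.1).trans_lt (EReal.coe_lt_top _)
  · exact bot_ne_top

end Entropy

section EmpiricalLimit

variable {X : Type*} [MeasurableSpace X] {m : Measure X} {α : X → X} {μ : (X → ℝ) → ℝ} {t : ℝ}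

/-- `μ` is a weak-* cluster point of the empirical measures `δ_{x,n}` as `n → ∞`, where `x` may
depend on `n`. -/
def IsEmpiricalLimit (α : X → X) (μ : (X → ℝ) → ℝ) : Prop :=
  ∀ (k : ℕ) (φs : Fin k → X → ℝ), (∀ i, IsBddMeas (φs i)) → ∀ η > 0,
    ∃ᶠ n in atTop, (empiricalNhd α μ φs η n).Nonempty

theorem IsEmpiricalLimit.frequently_exists_abs_sub_lt (h : IsEmpiricalLimit α μ) {f : X → ℝ}
    (hf : IsBddMeas f) {η : ℝ} (hη : 0 < η) :
    ∃ᶠ n : ℕ in atTop, ∃ x, |birkhoff α f n x / n - μ f| < η :=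
  (h 1 (fun _ => f) (fun _ => hf) η hη).mono fun _ ⟨x, hx⟩ => ⟨x, hx 0⟩

theorem IsEmpiricalLimit.nonneg (h : IsEmpiricalLimit α μ) {f : X → ℝ} (hf : IsBddMeas f)
    (hf0 : ∀ x, 0 ≤ f x) : 0 ≤ μ f := by
  by_contra! hneg
  obtain ⟨n, x, hx⟩ := (h.frequently_exists_abs_sub_lt hf (neg_pos.2 hneg)).exists
  have hmean : 0 ≤ birkhoff α f n x / n :=
    div_nonneg (Finset.sum_nonneg fun i _ => hf0 _) n.cast_nonneg
  linarith [(abs_lt.1 hx).2]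

theorem IsEmpiricalLimit.map_one (h : IsEmpiricalLimit α μ) : μ (fun _ => 1) = 1 := by
  refine (eq_of_forall_dist_le fun η hη => ?_).symm
  obtain ⟨n, ⟨x, hx⟩, hn⟩ := ((h.frequently_exists_abs_sub_lt (isBddMeas_const 1) hη).and_eventually
    (eventually_gt_atTop 0)).exists
  have hmean : birkhoff α (fun _ => 1) n x / n = 1 := by simp [birkhoff, hn.ne']
  rw [hmean] at hx
  exact hx.le

theorem IsEmpiricalLimit.map_comp (hα : Measurable α) (h : IsEmpiricalLimit α μ) {f : X → ℝ}
    (hf : IsBddMeas f) : μ (f ∘ α) = μ f := by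
  obtain ⟨b, hb⟩ := hf.2
  refine eq_of_forall_dist_le fun η hη => ?_
  have hsmall : ∀ᶠ n : ℕ in atTop, 2 * b / n < η / 2 :=
    (tendsto_const_div_atTop_nhds_zero_nat (2 * b)).eventually_lt_const (half_pos hη)
  obtain ⟨n, ⟨x, hx⟩, hn⟩ := ((h 2 ![f, f ∘ α]
    (Fin.forall_fin_two.2 ⟨hf, hf.comp_measurable hα⟩) (η / 4) (by positivity)).and_eventually
      hsmall).exists
  have hf_close : |birkhoff α f n x / n - μ f| < η / 4 := hx 0
  have hfα_close : |birkhoff α (f ∘ α) n x / n - μ (f ∘ α)| < η / 4 := hx 1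
  have hdiff : |birkhoff α (f ∘ α) n x / n - birkhoff α f n x / n| ≤ 2 * b / n := by
    rw [← sub_div, abs_div, Nat.abs_cast]
    gcongr
    exact abs_birkhoff_comp_sub_birkhoff_le hb n x
  rw [Real.dist_eq]
  rw [abs_lt] at hf_close hfα_close
  rw [abs_le] at hdiff ⊢
  constructor <;> linarith

theorem IsEmpiricalLimit.memMalphaB (hα : Measurable α) (hμ : IsBFunctional μ)
    (h : IsEmpiricalLimit α μ) : MemMalphaB α μ :=
  ⟨hμ, fun _ => h.nonneg, h.map_one, fun _ => h.map_comp hα⟩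

theorem localGrowthLE_of_not_isEmpiricalLimit (hα : Measurable α) (hbdd : ShiftBounded m α)
    (h : ¬IsEmpiricalLimit α μ) (t : ℝ) : LocalGrowthLE m α μ t := by
  obtain ⟨C, hC1, hC⟩ := hbdd.exists_map_le_smul hα
  simp only [IsEmpiricalLimit, not_forall, not_frequently, Set.not_nonempty_iff_eq_empty] at h
  obtain ⟨k, φs, hφs, η, hη, hempty⟩ := h
  obtain ⟨N, hN⟩ := eventually_atTop.1 hempty
  refine ⟨k, φs, hφs, η, hη, C ^ N * Real.exp (N * |t|), by positivity, fun n _ f hf => ?_⟩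
  rcases le_total N n with hNn | hnN
  · rw [hN n hNn, setIntegral_empty]
    positivity
  have hone : 1 ≤ Real.exp (N * |t|) * Real.exp (n * t) := by
    have hle : -(n * t) ≤ N * |t| :=
      calc -(n * t) ≤ n * |t| := by
            rw [← mul_neg]
            exact mul_le_mul_of_nonneg_left (neg_le_abs t) n.cast_nonneg
        _ ≤ N * |t| := by gcongr
    rw [← Real.exp_add, Real.one_le_exp_iff]
    linarith
  calc ∫ x in empiricalNhd α μ φs η n, |f (α^[n] x)| ∂m ≤ ∫ x, |f (α^[n] x)| ∂m :=
        setIntegral_le_integral (integrable_comp_iterate hα hC n hf).abs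
          (Eventually.of_forall fun _ => abs_nonneg _)
    _ ≤ C ^ n * ∫ x, |f x| ∂m := integral_abs_comp_iterate_le hα hC n hf
    _ ≤ C ^ N * ∫ x, |f x| ∂m := by gcongr
    _ ≤ C ^ N * (∫ x, |f x| ∂m) * (Real.exp (N * |t|) * Real.exp (n * t)) :=
        le_mul_of_one_le_right (by positivity) hone
    _ = C ^ N * Real.exp (N * |t|) * Real.exp (n * t) * ∫ x, |f x| ∂m := by ring

theorem localGrowthLE_of_tEntropyBExt_lt (hα : Measurable α) (hbdd : ShiftBounded m α)
    (hμ : IsBFunctional μ) (ht : tEntropyBExt m α μ < t) : LocalGrowthLE m α μ t := by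
  by_cases hlim : IsEmpiricalLimit α μ
  · have hM := hlim.memMalphaB hα hμ
    rw [tEntropyBExt, if_pos hM] at ht
    obtain ⟨n, hn, D, hlt⟩ := exists_tauNB_lt_of_tEntropyB_lt ht
    obtain ⟨ψ, hψ, hcontr, hlow⟩ := exists_isContractiveWeight_of_tauNB_lt hα hbdd hM hlt
    exact localGrowthLE_of_isContractiveWeight hα hbdd hψ hn hcontr hlow
  · exact localGrowthLE_of_not_isEmpiricalLimit hα hbdd hlim t

end EmpiricalLimit

/-- **Theorem 12 (entropy statistic theorem)**: for any continuous linear functional `μ` on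
`B(X, 𝔄)` and any `ε > 0` there are a weak-* (basic) neighborhood of `μ` — described by
finitely many test functions `φs i ∈ B(X, 𝔄)` and a tolerance `η > 0` — and a constant
`C > 0` such that for all `n` and all `f ∈ L¹(X, m)`,
`∫_{Xₙ(O(μ))} |f ∘ αⁿ| dm ≤ C·e^{n(τ(μ)+ε)}·∫_X |f| dm`, where
`Xₙ(O(μ)) = {x | δ_{x,n} ∈ O(μ)} = {x | ∀ i, |δ_{x,n}[φs i] − μ[φs i]| < η}`; if
`τ(μ) = −∞` the exponent `n(τ(μ)+ε)` is replaced by `n·(−1/ε)`. -/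
theorem entropy_statistic_theorem
    {X : Type*} [MeasurableSpace X] (m : Measure X) (α : X → X)
    (hα : Measurable α) (hbdd : ShiftBounded m α)
    (μ : (X → ℝ) → ℝ) (hμ : IsBFunctional μ) (ε : ℝ) (hε : 0 < ε) :
    ∃ (k : ℕ) (φs : Fin k → X → ℝ) (_ : ∀ i, IsBddMeas (φs i)) (η : ℝ) (_ : 0 < η)
      (C : ℝ) (_ : 0 < C),
      (tEntropyBExt m α μ ≠ ⊥ →
        ∀ n : ℕ, 0 < n → ∀ f : X → ℝ, Integrable f m →
          (∫ x in {x | ∀ i, |birkhoff α (φs i) n x / (n : ℝ) - μ (φs i)| < η},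
              |f (α^[n] x)| ∂m) ≤
            C * Real.exp ((n : ℝ) * ((tEntropyBExt m α μ).toReal + ε)) *
              ∫ x, |f x| ∂m) ∧
      (tEntropyBExt m α μ = ⊥ →
        ∀ n : ℕ, 0 < n → ∀ f : X → ℝ, Integrable f m →
          (∫ x in {x | ∀ i, |birkhoff α (φs i) n x / (n : ℝ) - μ (φs i)| < η},
              |f (α^[n] x)| ∂m) ≤
            C * Real.exp ((n : ℝ) * (-1 / ε)) * ∫ x, |f x| ∂m) := by
  by_cases hbot : tEntropyBExt m α μ = ⊥
  · obtain ⟨k, φs, hφs, η, hη, C, hC, hle⟩ := localGrowthLE_of_tEntropyBExt_lt hα hbdd hμ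
      (hbot.trans_lt (EReal.bot_lt_coe (-1 / ε)))
    exact ⟨k, φs, hφs, η, hη, C, hC, fun h => absurd hbot h, fun _ => hle⟩
  · have hlt : tEntropyBExt m α μ < ((tEntropyBExt m α μ).toReal + ε : ℝ) := by
      conv_lhs => rw [← EReal.coe_toReal (tEntropyBExt_ne_top hα hbdd μ) hbot]
      exact EReal.coe_lt_coe_iff.2 (lt_add_of_pos_right _ hε)
    obtain ⟨k, φs, hφs, η, hη, C, hC, hle⟩ := localGrowthLE_of_tEntropyBExt_lt hα hbdd hμ hlt
    exact ⟨k, φs, hφs, η, hη, C, hC, fun _ => hle, fun h => absurd h hbot⟩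

end
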